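/- Let B and C be idempotent algebras over the complex numbers with faithful functionals μ_B and μ_C which admit modular automorphisms σ_B and σ_C respectively, and let M be an idempotent B-C-bimodule. If ω is a factorizable functional on M with factorizations _Bω : M → B and ω_C : M → C, then for every x in B and y in C the functional ω' on M defined by ω'(m) = ω(x m y) is again factorizable, with left factorization _Bω'(m) = _Bω(my)·σ_B(x) and right factorization ω'_C(m) = σ_C^{-1}(y)·ω_C(xm) for all m in M. In particular, the factorizable functionals on M form a sub-bimodule of the linear dual of M under this action of C on the left and B on the right. -/

import Mathlib

/-!
The modular identity `μ(ab) = μ(b σ(a))` absorbs the action of an element into a factorization: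
`ω(xm) = μB(x f(m)) = μB(f(m) σB(x))`, and right multiplication by `σB(x)` commutes with the left
action of `B`. Dually `ω(my) = μC(g(m) y) = μC(σC⁻¹(y) g(m))`. Since the two actions commute,
precomposing a factorization with the action from the other side preserves its equivariance.
-/

/-- `σ` satisfies the modular identity for `μ`, i.e. it measures the failure of `μ` to be a trace.
A modular automorphism is an algebra automorphism with this property. -/
def IsModular {A N : Type*} [Mul A] (μ : A → N) (σ : A → A) : Prop :=
  ∀ a b : A, μ (a * b) = μ (b * σ a)

section Factorization

variable {R A M M' N : Type*} [CommSemiring R] [AddCommMonoid M] [Module R M]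
  [AddCommMonoid M'] [Module R M'] [AddCommMonoid N] [Module R N]

section NonAssoc

variable [NonUnitalNonAssocSemiring A] [Module R A]

/-- `f` is a left factorization of `ω` through `μ`: a map equivariant for the left multiplication
`l` of `A` on `M`, with `μ ∘ f = ω`. -/
structure IsLeftFactorization (μ : A →ₗ[R] N) (l : A →ₗ[R] M →ₗ[R] M) (ω : M →ₗ[R] N)
    (f : M →ₗ[R] A) : Prop where
  map_act (a : A) (m : M) : f (l a m) = a * f m
  apply_eq (m : M) : μ (f m) = ω m

/-- `g` is a right factorization of `ω` through `μ`: a map equivariant for the right multiplication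
`r` of `A` on `M`, with `μ ∘ g = ω`. -/
structure IsRightFactorization (μ : A →ₗ[R] N) (r : M →ₗ[R] A →ₗ[R] M) (ω : M →ₗ[R] N)
    (g : M →ₗ[R] A) : Prop where
  map_act (m : M) (a : A) : g (r m a) = g m * a
  apply_eq (m : M) : μ (g m) = ω m

theorem IsLeftFactorization.comp {μ : A →ₗ[R] N} {l : A →ₗ[R] M →ₗ[R] M}
    {l' : A →ₗ[R] M' →ₗ[R] M'} {ω : M →ₗ[R] N} {f : M →ₗ[R] A} {e : M' →ₗ[R] M}
    (hf : IsLeftFactorization μ l ω f) (he : ∀ a m, e (l' a m) = l a (e m)) :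
    IsLeftFactorization μ l' (ω ∘ₗ e) (f ∘ₗ e) where
  map_act a m := (congrArg f (he a m)).trans (hf.map_act a (e m))
  apply_eq m := hf.apply_eq (e m)

theorem IsRightFactorization.comp {μ : A →ₗ[R] N} {r : M →ₗ[R] A →ₗ[R] M}
    {r' : M' →ₗ[R] A →ₗ[R] M'} {ω : M →ₗ[R] N} {g : M →ₗ[R] A} {e : M' →ₗ[R] M}
    (hg : IsRightFactorization μ r ω g) (he : ∀ m a, e (r' m a) = r (e m) a) :
    IsRightFactorization μ r' (ω ∘ₗ e) (g ∘ₗ e) where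
  map_act m a := (congrArg g (he m a)).trans (hg.map_act (e m) a)
  apply_eq m := hg.apply_eq (e m)

end NonAssoc

variable [NonUnitalSemiring A] [Module R A] {μ : A →ₗ[R] N} {σ : A → A} {ω : M →ₗ[R] N}

theorem IsLeftFactorization.mulRight_comp [IsScalarTower R A A] {l : A →ₗ[R] M →ₗ[R] M}
    {f : M →ₗ[R] A} (hf : IsLeftFactorization μ l ω f) (hσ : IsModular μ σ) (x : A) :
    IsLeftFactorization μ l (ω ∘ₗ l x) (LinearMap.mulRight R (σ x) ∘ₗ f) where
  map_act a m :=
    calc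
      f (l a m) * σ x = a * f m * σ x := by rw [hf.map_act]
      _ = a * (f m * σ x) := mul_assoc _ _ _
  apply_eq m :=
    calc
      μ (f m * σ x) = μ (x * f m) := (hσ x (f m)).symm
      _ = μ (f (l x m)) := by rw [hf.map_act]
      _ = ω (l x m) := hf.apply_eq _

theorem IsRightFactorization.mulLeft_comp [SMulCommClass R A A] {r : M →ₗ[R] A →ₗ[R] M}
    {g : M →ₗ[R] A} (hg : IsRightFactorization μ r ω g) (hσ : IsModular μ σ) (z : A) :
    IsRightFactorization μ r (ω ∘ₗ r.flip (σ z)) (LinearMap.mulLeft R z ∘ₗ g) where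
  map_act m a :=
    calc
      z * g (r m a) = z * (g m * a) := by rw [hg.map_act]
      _ = z * g m * a := (mul_assoc _ _ _).symm
  apply_eq m :=
    calc
      μ (z * g m) = μ (g m * σ z) := hσ z (g m)
      _ = μ (g (r m (σ z))) := by rw [hg.map_act]
      _ = ω (r m (σ z)) := hg.apply_eq _

end Factorization

theorem statement7_general {R B C M N : Type*} [CommSemiring R]
    [NonUnitalSemiring B] [Module R B] [IsScalarTower R B B]
    [NonUnitalSemiring C] [Module R C] [SMulCommClass R C C]
    [AddCommMonoid M] [Module R M] [AddCommMonoid N] [Module R N]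
    {μB : B →ₗ[R] N} {μC : C →ₗ[R] N} {σB : B → B} {σC : C ≃ C}
    (hσB : IsModular μB σB) (hσC : IsModular μC σC)
    {l : B →ₗ[R] M →ₗ[R] M} {r : M →ₗ[R] C →ₗ[R] M}
    (h_lr : ∀ (b : B) (m : M) (c : C), r (l b m) c = l b (r m c))
    {ω : M →ₗ[R] N} {f : M →ₗ[R] B} {g : M →ₗ[R] C}
    (hf : IsLeftFactorization μB l ω f) (hg : IsRightFactorization μC r ω g) (x : B) (y : C) :
    IsLeftFactorization μB l (ω ∘ₗ l x ∘ₗ r.flip y)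
        (LinearMap.mulRight R (σB x) ∘ₗ f ∘ₗ r.flip y) ∧
      IsRightFactorization μC r (ω ∘ₗ l x ∘ₗ r.flip y)
        (LinearMap.mulLeft R (σC.symm y) ∘ₗ g ∘ₗ l x) := by
  constructor
  · exact (hf.mulRight_comp hσB x).comp fun b m ↦ h_lr b m y
  · have hgx : IsRightFactorization μC r (ω ∘ₗ l x) (g ∘ₗ l x) :=
      hg.comp fun m c ↦ (h_lr x m c).symm
    simpa only [Equiv.apply_symm_apply, LinearMap.comp_assoc] using hgx.mulLeft_comp hσC (σC.symm y)

/-- Let `B`, `C` be idempotent algebras over `ℂ` with faithful functionals `μB`, `μC`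
admitting modular automorphisms `σB`, `σC`, and let `M` be an idempotent
`B`-`C`-bimodule.  If `ω` is a factorizable functional on `M` with factorizations
`f : M → B` (left) and `g : M → C` (right), then for every `x ∈ B`, `y ∈ C` the
functional `ω' : m ↦ ω (x·m·y)` is again factorizable, with left factorization
`m ↦ f (m·y) * σB x` and right factorization `m ↦ σC⁻¹ y * g (x·m)`.
In particular, the factorizable functionals on `M` form a sub-bimodule of the linear
dual of `M` under this action of `C` on the left and `B` on the right. -/
theorem statement7
    (B : Type*) [NonUnitalRing B] [Module ℂ B]
    [SMulCommClass ℂ B B] [IsScalarTower ℂ B B]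
    (C : Type*) [NonUnitalRing C] [Module ℂ C]
    [SMulCommClass ℂ C C] [IsScalarTower ℂ C C]
    (h_idem_B : Submodule.span ℂ {x : B | ∃ a b : B, a * b = x} = ⊤)
    (h_idem_C : Submodule.span ℂ {x : C | ∃ a b : C, a * b = x} = ⊤)
    (μB : B →ₗ[ℂ] ℂ) (μC : C →ₗ[ℂ] ℂ)
    (hμB : ∀ d : B, d ≠ 0 → (∃ b : B, μB (d * b) ≠ 0) ∧ (∃ b' : B, μB (b' * d) ≠ 0))
    (hμC : ∀ d : C, d ≠ 0 → (∃ b : C, μC (d * b) ≠ 0) ∧ (∃ b' : C, μC (b' * d) ≠ 0))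
    -- modular automorphisms of μB and μC
    (σB : B ≃ₗ[ℂ] B) (hσB_mul : ∀ a b : B, σB (a * b) = σB a * σB b)
    (hσB : ∀ a b : B, μB (a * b) = μB (b * σB a))
    (σC : C ≃ₗ[ℂ] C) (hσC_mul : ∀ a b : C, σC (a * b) = σC a * σC b)
    (hσC : ∀ a b : C, μC (a * b) = μC (b * σC a))
    -- the idempotent B-C-bimodule M
    (M : Type*) [AddCommGroup M] [Module ℂ M]
    (l : B →ₗ[ℂ] M →ₗ[ℂ] M) (r : M →ₗ[ℂ] C →ₗ[ℂ] M)
    (h_l : ∀ (a b : B) (m : M), l (a * b) m = l a (l b m))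
    (h_r : ∀ (m : M) (y y' : C), r (r m y) y' = r m (y * y'))
    (h_lr : ∀ (a : B) (m : M) (y : C), r (l a m) y = l a (r m y))
    (h_BM : Submodule.span ℂ {m : M | ∃ (x : B) (m' : M), l x m' = m} = ⊤)
    (h_MC : Submodule.span ℂ {m : M | ∃ (m' : M) (y : C), r m' y = m} = ⊤)
    -- ω factorizable with factorizations f and g
    (ω : M →ₗ[ℂ] ℂ) (f : M →ₗ[ℂ] B) (g : M →ₗ[ℂ] C)
    (hf : ∀ (x : B) (m : M), f (l x m) = x * f m)
    (hg : ∀ (m : M) (y : C), g (r m y) = g m * y)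
    (hfω : ∀ m : M, μB (f m) = ω m) (hgω : ∀ m : M, μC (g m) = ω m) :
    ∀ (x : B) (y : C),
      ∃ (F : M →ₗ[ℂ] B) (G : M →ₗ[ℂ] C),
        (∀ m : M, F m = f (r m y) * σB x) ∧
        (∀ m : M, G m = σC.symm y * g (l x m)) ∧
        (∀ (a : B) (m : M), F (l a m) = a * F m) ∧
        (∀ (m : M) (c : C), G (r m c) = G m * c) ∧
        (∀ m : M, μB (F m) = ω (l x (r m y))) ∧
        (∀ m : M, μC (G m) = ω (l x (r m y))) := by
  intro x y
  have ⟨hF, hG⟩ := statement7_general hσB (σC := σC.toEquiv) hσC h_lr ⟨hf, hfω⟩ ⟨hg, hgω⟩ x y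
  exact ⟨_, _, fun _ ↦ rfl, fun _ ↦ rfl, hF.map_act, hG.map_act, hF.apply_eq, hG.apply_eq⟩
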